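/- Let B be a supersoluble brace and let C be a maximal subbrace of B (a proper subbrace contained in no larger proper subbrace). Then |(B,+):(C,+)| = |(B,·):(C,·)| is a prime number; in particular, (C,+) is a maximal subgroup of (B,+) of prime index and (C,·) is a maximal subgroup of (B,·) of prime index. -/

import Mathlib

/-- A (skew left) brace: a set with an additive group structure (not necessarily abelian)
and a multiplicative group structure sharing the same identity, satisfying the skew
distributive law `a * (b + c) = a * b + -a + a * c`. -/
class SkewBrace (B : Type*) extends AddGroup B, Group B where
  one_eq_zero : (1 : B) = (0 : B)
  skew_distrib : ∀ a b c : B, a * (b + c) = a * b + -a + a * c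

/-- A group is supersoluble if it has a finite chain of normal subgroups with all
factors cyclic. -/
def Group.IsSupersoluble (G : Type*) [Group G] : Prop :=
  ∃ (n : ℕ) (H : ℕ → Subgroup G),
    H 0 = ⊥ ∧ H n = ⊤ ∧ (∀ i, (H i).Normal) ∧ (∀ i, i < n → H i ≤ H (i + 1)) ∧
    ∀ i, i < n → ∃ x ∈ H (i + 1), ∀ y ∈ H (i + 1), ∃ k : ℤ, (x ^ k)⁻¹ * y ∈ H i

namespace SkewBrace

variable {B : Type*} [SkewBrace B]

/-- `lam a b = -a + a * b`, i.e. `λ_a(b)`. -/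
def lam (a b : B) : B := -a + a * b

/-- the star operation `a ∗ b = λ_a(b) - b`. -/
def starOp (a b : B) : B := lam a b + -b

/-- the additive commutator `[a,b]_+`. -/
def addCommutator (a b : B) : B := -a + -b + a + b

/-- A subbrace of `B`: a subset that is a subgroup of both `(B,+)` and `(B,·)`. -/
structure Subbrace (B : Type*) [SkewBrace B] where
  carrier : Set B
  zero_mem : (0 : B) ∈ carrier
  add_mem : ∀ {a b : B}, a ∈ carrier → b ∈ carrier → a + b ∈ carrier
  neg_mem : ∀ {a : B}, a ∈ carrier → -a ∈ carrier
  mul_mem : ∀ {a b : B}, a ∈ carrier → b ∈ carrier → a * b ∈ carrier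
  inv_mem : ∀ {a : B}, a ∈ carrier → a⁻¹ ∈ carrier

/-- An ideal of `B`: a subbrace that is normal in `(B,+)` and in `(B,·)` and is
invariant under all the maps `λ_b`. -/
structure BraceIdeal (B : Type*) [SkewBrace B] extends Subbrace B where
  addConj_mem : ∀ (b : B) {a : B}, a ∈ carrier → b + a + -b ∈ carrier
  mulConj_mem : ∀ (b : B) {a : B}, a ∈ carrier → b * a * b⁻¹ ∈ carrier
  lam_mem : ∀ (b : B) {a : B}, a ∈ carrier → lam b a ∈ carrier

/-- The additive subgroup underlying a subbrace. -/
def Subbrace.addSubgroup (S : Subbrace B) : AddSubgroup B where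
  carrier := S.carrier
  zero_mem' := S.zero_mem
  add_mem' := S.add_mem
  neg_mem' := S.neg_mem

/-- The multiplicative subgroup underlying a subbrace. -/
def Subbrace.subgroup (S : Subbrace B) : Subgroup B where
  carrier := S.carrier
  one_mem' := by rw [one_eq_zero]; exact S.zero_mem
  mul_mem' := S.mul_mem
  inv_mem' := S.inv_mem

/-- Given ideals `J ≤ I` of `B`, `MemSocQuotRel I J x` says that the coset of `x`
lies in `Soc(I/J) = Ker(λ) ∩ Z(I/J, +)` (for `I = B` take `I = Set.univ`). -/
def MemSocQuotRel (I J : Set B) (x : B) : Prop :=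
  x ∈ I ∧ (∀ y ∈ I, -y + lam x y ∈ J) ∧ ∀ y ∈ I, -(y + x) + (x + y) ∈ J

/-- Given ideals `J ≤ I` of `B`, `MemZetaQuotRel I J x` says that the coset of `x`
lies in `ζ(I/J) = Soc(I/J) ∩ Z(I/J, ·)`. -/
def MemZetaQuotRel (I J : Set B) (x : B) : Prop :=
  MemSocQuotRel I J x ∧ ∀ y ∈ I, (y * x)⁻¹ * (x * y) ∈ J

/-- The coset of `x` lies in `Soc(B/J)`. -/
def MemSocQuot (J : Set B) (x : B) : Prop := MemSocQuotRel Set.univ J x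

/-- The coset of `x` lies in `ζ(B/J)`. -/
def MemZetaQuot (J : Set B) (x : B) : Prop := MemZetaQuotRel Set.univ J x

/-- For ideals `I ≤ J`, the additive group of the quotient `J/I` is infinite cyclic. -/
def QuotAddInfCyclic (I J : Set B) : Prop :=
  ∃ x ∈ J, (∀ y ∈ J, ∃ n : ℤ, -(n • x) + y ∈ I) ∧ ∀ n : ℤ, n • x ∈ I → n = 0

/-- For ideals `I ≤ J`, the quotient `J/I` has prime order `p`. -/
def QuotPrimeOrder (I J : Set B) (p : ℕ) : Prop :=
  p.Prime ∧ ∃ x ∈ J, x ∉ I ∧ p • x ∈ I ∧ ∀ y ∈ J, ∃ n : ℤ, -(n • x) + y ∈ I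

/-- A brace is supersoluble if it has a finite chain of ideals each factor of which
either is additively infinite cyclic and contained in the socle of the corresponding
quotient, or has prime order. -/
def IsSupersoluble (B : Type*) [SkewBrace B] : Prop :=
  ∃ (n : ℕ) (I : ℕ → BraceIdeal B),
    (I 0).carrier = {0} ∧ (I n).carrier = Set.univ ∧
    (∀ i, i < n → (I i).carrier ⊆ (I (i + 1)).carrier) ∧
    ∀ i, i < n →
      (QuotAddInfCyclic (I i).carrier (I (i + 1)).carrier ∧
        ∀ x ∈ (I (i + 1)).carrier, MemSocQuot (I i).carrier x) ∨
      ∃ p : ℕ, QuotPrimeOrder (I i).carrier (I (i + 1)).carrier p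

/-- The upper socle series of the brace (carrier of the ideal) `I`. -/
def socChainRel (I : Set B) : ℕ → Set B
  | 0 => {0}
  | n + 1 => {x | MemSocQuotRel I (socChainRel I n) x}

/-- The upper central series of the brace (carrier of the ideal) `I`. -/
def zetaChainRel (I : Set B) : ℕ → Set B
  | 0 => {0}
  | n + 1 => {x | MemZetaQuotRel I (zetaChainRel I n) x}

/-- The upper socle series `Soc_n(B)` of `B`. -/
def socChain (B : Type*) [SkewBrace B] : ℕ → Set B := socChainRel Set.univ

/-- The upper central series `ζ_n(B)` of `B`. -/
def zetaChain (B : Type*) [SkewBrace B] : ℕ → Set B := zetaChainRel Set.univ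

/-- A brace is centrally nilpotent if its upper central series reaches `B`. -/
def IsCentrallyNilpotent (B : Type*) [SkewBrace B] : Prop :=
  ∃ m : ℕ, zetaChain B m = Set.univ

end SkewBrace

namespace SkewBrace

/-!
Let `J ≤ I` be consecutive terms of the chain of ideals with `J ≤ C` and `I ≰ C`. By maximality
`C + I = B`, so `C` has the same index in `B` as `C ∩ I` in `I`, in both groups. The additive and
multiplicative cosets of an ideal coincide, so it suffices to find an ideal `K ≤ C` of prime
additive index in `I`. If `I / J` has prime order, take `K = J`. If `I / J` is cyclic and contained
in the socle of `B / J`, every additive subgroup between `J` and `I` is an ideal, because `λ` acts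
on a cyclic group by multiplication with integers; here `K = C ∩ I` works, because for an ideal `A`
with `K < A ≤ I` maximality gives `C + A = B` and hence `A = I`.
-/

theorem exists_le_succ_not_le {α : Type*} [LE α] {f : ℕ → α} {a : α} {n : ℕ} (h0 : f 0 ≤ a)
    (hn : ¬ f n ≤ a) : ∃ i < n, f i ≤ a ∧ ¬ f (i + 1) ≤ a := by
  by_contra! hstep
  have hle : ∀ i ≤ n, f i ≤ a := fun i => by
    induction i with
    | zero => exact fun _ => h0
    | succ i ih => exact fun hi => hstep i hi (ih (Nat.le_of_succ_le hi))
  exact hn (hle n le_rfl)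

section GroupTheory

@[to_additive]
theorem subgroup_isCoatom_of_prime_index {G : Type*} [Group G] {H : Subgroup G}
    (h : H.index.Prime) : IsCoatom H := by
  refine ⟨fun htop => h.ne_one (Subgroup.index_eq_one.2 htop), fun K hHK => ?_⟩
  have hK : (H.relIndex K * K.index).Prime := by rwa [Subgroup.relIndex_mul_index hHK.le]
  rcases Nat.prime_mul_iff.1 hK with ⟨-, hindex⟩ | ⟨-, hrel⟩
  · exact Subgroup.index_eq_one.1 hindex
  · exact absurd (Subgroup.relIndex_eq_one.1 hrel) hHK.not_ge

@[to_additive]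
theorem subgroup_relIndex_sup_of_normal {G : Type*} [Group G] (H N : Subgroup G) [N.Normal] :
    H.relIndex (H ⊔ N) = H.relIndex N := by
  let f := Subgroup.quotientSubgroupOfEmbeddingOfLE H (le_sup_right : N ≤ H ⊔ N)
  refine (Nat.card_eq_of_bijective f ⟨f.injective, fun q => ?_⟩).symm
  obtain ⟨⟨g, hg⟩, rfl⟩ := QuotientGroup.mk_surjective q
  obtain ⟨n, hn, h, hh, rfl⟩ := Subgroup.mem_sup_of_normal_left.1 (sup_comm H N ▸ hg)
  exact ⟨QuotientGroup.mk ⟨n, hn⟩, QuotientGroup.eq.2 (by simpa [Subgroup.mem_subgroupOf] using hh)⟩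

@[to_additive]
theorem subgroup_index_eq_of_prime_relIndex {G : Type*} [Group G] {H K N : Subgroup G} [N.Normal]
    (hsup : H ⊔ N = ⊤) (hKH : K ≤ H) (hNH : ¬ N ≤ H) (hp : (K.relIndex N).Prime) :
    H.index = K.relIndex N := by
  rw [← Subgroup.relIndex_top_right, ← hsup, subgroup_relIndex_sup_of_normal]
  exact (hp.eq_one_or_self_of_dvd _ (Subgroup.relIndex_dvd_of_le_left N hKH)).resolve_left
    fun h => hNH (Subgroup.relIndex_eq_one.1 h)

variable {G : Type*} [AddGroup G] {N : AddSubgroup G}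

theorem eq_sup_zmultiples {H : AddSubgroup G} {x : G} (hNH : N ≤ H) (hx : x ∈ H)
    (hgen : ∀ y ∈ H, ∃ n : ℤ, -(n • x) + y ∈ N) : H = N ⊔ AddSubgroup.zmultiples x := by
  refine le_antisymm (fun y hy => ?_) (sup_le hNH (AddSubgroup.zmultiples_le_of_mem hx))
  obtain ⟨n, hn⟩ := hgen y hy
  simpa using add_mem (AddSubgroup.mem_sup_right (AddSubgroup.zsmul_mem_zmultiples x n))
    (AddSubgroup.mem_sup_left hn)

variable [N.Normal]

theorem mem_sup_zmultiples_iff {x y : G} : y ∈ N ⊔ AddSubgroup.zmultiples x ↔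
    (y : G ⧸ N) ∈ AddSubgroup.zmultiples (x : G ⧸ N) := by
  have hcomap : N ⊔ AddSubgroup.zmultiples x =
      (AddSubgroup.zmultiples (x : G ⧸ N)).comap (QuotientAddGroup.mk' N) := by
    rw [sup_comm, ← QuotientAddGroup.coe_mk', ← AddMonoidHom.map_zmultiples,
      AddSubgroup.comap_map_eq, QuotientAddGroup.ker_mk']
  rw [hcomap, AddSubgroup.mem_comap, QuotientAddGroup.mk'_apply]

theorem relIndex_sup_zmultiples (x : G) :
    N.relIndex (N ⊔ AddSubgroup.zmultiples x) = addOrderOf (x : G ⧸ N) := by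
  rw [AddSubgroup.relIndex_sup_left, ← Nat.card_zmultiples, ← QuotientAddGroup.coe_mk',
    ← AddMonoidHom.map_zmultiples, ← AddSubgroup.relIndex_ker, QuotientAddGroup.ker_mk']

theorem prime_relIndex_of_covBy {x : G} (h : N ⋖ N ⊔ AddSubgroup.zmultiples x) :
    (N.relIndex (N ⊔ AddSubgroup.zmultiples x)).Prime := by
  have hx : (x : G ⧸ N) ≠ 0 := fun h0 => h.lt.not_ge <|
    sup_le le_rfl (AddSubgroup.zmultiples_le_of_mem ((QuotientAddGroup.eq_zero_iff x).1 h0))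
  rw [relIndex_sup_zmultiples]
  obtain ⟨q, hq, hdvd⟩ :=
    Nat.exists_prime_and_dvd (mt AddMonoid.addOrderOf_eq_one_iff.1 hx)
  have : Fact q.Prime := ⟨hq⟩
  have hle : N ⊔ AddSubgroup.zmultiples (q • x) ≤ N ⊔ AddSubgroup.zmultiples x :=
    sup_le_sup_left (AddSubgroup.zmultiples_le_of_mem
      (AddSubgroup.nsmul_mem_zmultiples x q)) N
  rcases h.eq_or_eq le_sup_left hle with hbot | htop
  · have hqx : q • x ∈ N := hbot ▸ AddSubgroup.mem_sup_right (AddSubgroup.mem_zmultiples _)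
    rwa [addOrderOf_eq_prime (p := q) ((QuotientAddGroup.eq_zero_iff _).2 hqx) hx]
  · have hxq : x ∈ N ⊔ AddSubgroup.zmultiples (q • x) :=
      htop ▸ AddSubgroup.mem_sup_right (AddSubgroup.mem_zmultiples x)
    obtain ⟨n, hn⟩ := AddSubgroup.mem_zmultiples_iff.1 (mem_sup_zmultiples_iff.1 hxq)
    have hzero : (n * q - 1) • (x : G ⧸ N) = 0 := by
      rw [sub_zsmul, mul_zsmul, natCast_zsmul, one_zsmul, ← QuotientAddGroup.mk_nsmul, hn,
        add_neg_cancel]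
    have hunit : (q : ℤ) ∣ 1 := (Int.dvd_iff_dvd_of_dvd_sub
      ((Int.natCast_dvd_natCast.2 hdvd).trans (addOrderOf_dvd_iff_zsmul_eq_zero.2 hzero))).1
      (dvd_mul_left _ n)
    exact absurd (Int.natCast_dvd_natCast.1 hunit) hq.not_dvd_one

end GroupTheory

section Brace

variable {B : Type*} [SkewBrace B]

theorem mul_eq_add_lam (a b : B) : a * b = a + lam a b := by
  simp [lam]

/-- The map `λ_a` as an endomorphism of `(B, +)`. -/
def lamHom (a : B) : B →+ B :=
  AddMonoidHom.mk' (lam a) fun b c => by simp only [lam, skew_distrib, add_assoc]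

theorem lamHom_apply (a b : B) : lamHom a b = lam a b := rfl

theorem inv_eq_neg_lam (a : B) : a⁻¹ = -lam a⁻¹ a := by
  simp [lam, one_eq_zero]

theorem inv_mul_eq_lam (a b : B) : a⁻¹ * b = lam a⁻¹ (-a + b) := by
  rw [← lamHom_apply, map_add, map_neg, lamHom_apply, lamHom_apply, ← inv_eq_neg_lam,
    ← mul_eq_add_lam]

theorem mul_mul_inv_eq (a b : B) :
    b * a * b⁻¹ = (b + lam b a + -b) + lam b (-b⁻¹ + lam a b⁻¹) := by
  have hinv : lam b b⁻¹ = -b := by simp [lam, one_eq_zero]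
  rw [mul_assoc, mul_eq_add_lam a, mul_eq_add_lam b]
  simp only [← lamHom_apply b, map_add, map_neg]
  simp [lamHom_apply, hinv, add_assoc]

namespace BraceIdeal

instance normal_addSubgroup (I : BraceIdeal B) : I.addSubgroup.Normal :=
  ⟨fun _ ha b => I.addConj_mem b ha⟩

instance normal_subgroup (I : BraceIdeal B) : I.subgroup.Normal :=
  ⟨fun _ ha b => I.mulConj_mem b ha⟩

theorem inv_mul_mem_iff (I : BraceIdeal B) {a b : B} :
    a⁻¹ * b ∈ I.subgroup ↔ -a + b ∈ I.addSubgroup := by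
  refine ⟨fun h => ?_, fun h => ?_⟩
  · have hlam : lam a (a⁻¹ * b) ∈ I.addSubgroup := I.lam_mem a h
    simpa [lam] using hlam
  · exact inv_mul_eq_lam a b ▸ I.lam_mem a⁻¹ h

theorem relIndex_subgroup (I : BraceIdeal B) (S : Subbrace B) :
    I.subgroup.relIndex S.subgroup = I.addSubgroup.relIndex S.addSubgroup :=
  Nat.card_congr <| Quotient.congr (Equiv.refl S.carrier) fun _ _ => by
    rw [QuotientGroup.leftRel_apply, QuotientAddGroup.leftRel_apply]
    exact I.inv_mul_mem_iff

/-- An additive subgroup `A` with `J ≤ A`, as an ideal of `B`, when it is invariant under all `λ_b`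
and `A / J` is contained in `Soc(B / J)`. -/
def ofLeSocle (J : BraceIdeal B) (A : AddSubgroup B) (hJA : J.addSubgroup ≤ A)
    (hsoc : ∀ a ∈ A, MemSocQuot J.carrier a) (hlam : ∀ b, ∀ a ∈ A, lam b a ∈ A) :
    BraceIdeal B :=
  have hconj : ∀ b, ∀ a ∈ A, b + a + -b ∈ A := fun b a ha => by
    have hcomm : -(-b + a) + (a + -b) ∈ A := hJA ((hsoc a ha).2.2 (-b) trivial)
    simpa [add_assoc] using A.add_mem ha hcomm
  { carrier := A
    zero_mem := A.zero_mem
    add_mem := A.add_mem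
    neg_mem := A.neg_mem
    mul_mem := fun {a b} ha hb => mul_eq_add_lam a b ▸ A.add_mem ha (hlam a b hb)
    inv_mem := fun {a} ha => inv_eq_neg_lam a ▸ A.neg_mem (hlam a⁻¹ a ha)
    addConj_mem := fun b _ ha => hconj b _ ha
    mulConj_mem := fun b {a} ha => mul_mul_inv_eq a b ▸ A.add_mem (hconj b _ (hlam b a ha))
      (hJA (J.lam_mem b ((hsoc a ha).2.1 b⁻¹ trivial)))
    lam_mem := fun b _ ha => hlam b _ ha }

theorem lam_mem_of_le_sup_zmultiples {I J : BraceIdeal B} {x : B}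
    (hI : I.addSubgroup = J.addSubgroup ⊔ AddSubgroup.zmultiples x) {A : AddSubgroup B}
    (hJA : J.addSubgroup ≤ A) (hAI : A ≤ I.addSubgroup) (b : B) {a : B} (ha : a ∈ A) :
    lam b a ∈ A := by
  let lamQuot : B ⧸ J.addSubgroup →+ B ⧸ J.addSubgroup :=
    QuotientAddGroup.map _ _ (lamHom b) fun _ h => J.lam_mem b h
  have exists_zsmul : ∀ y ∈ I.addSubgroup, ∃ n : ℤ, n • (x : B ⧸ J.addSubgroup) = y :=
    fun y hy => AddSubgroup.mem_zmultiples_iff.1 (mem_sup_zmultiples_iff.1 (hI ▸ hy))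
  have hx : x ∈ I.addSubgroup := hI ▸ AddSubgroup.mem_sup_right (AddSubgroup.mem_zmultiples x)
  obtain ⟨m, hm⟩ := exists_zsmul _ (I.lam_mem b hx)
  obtain ⟨n, hn⟩ := exists_zsmul a (hAI ha)
  have hlam : ((m • a : B) : B ⧸ J.addSubgroup) = lam b a := calc
    ((m • a : B) : B ⧸ J.addSubgroup) = n • m • (x : B ⧸ J.addSubgroup) := by
      rw [QuotientAddGroup.mk_zsmul, ← hn, zsmul_comm]
    _ = lamQuot a := by rw [hm, ← hn, map_zsmul]; rfl
    _ = lam b a := rfl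
  simpa using A.add_mem (A.zsmul_mem ha m) (hJA (QuotientAddGroup.eq.1 hlam))

theorem exists_addSubgroup_eq {I J : BraceIdeal B} {x : B}
    (hI : I.addSubgroup = J.addSubgroup ⊔ AddSubgroup.zmultiples x)
    (hsoc : ∀ a ∈ I.carrier, MemSocQuot J.carrier a) {A : AddSubgroup B}
    (hJA : J.addSubgroup ≤ A) (hAI : A ≤ I.addSubgroup) :
    ∃ K : BraceIdeal B, K.addSubgroup = A :=
  ⟨J.ofLeSocle A hJA (fun a ha => hsoc a (hAI ha))
    fun b _ ha => lam_mem_of_le_sup_zmultiples hI hJA hAI b ha, rfl⟩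

end BraceIdeal

theorem QuotPrimeOrder.relIndex_eq {I J : BraceIdeal B} {p : ℕ}
    (h : QuotPrimeOrder J.carrier I.carrier p) (hJI : J.addSubgroup ≤ I.addSubgroup) :
    J.addSubgroup.relIndex I.addSubgroup = p := by
  obtain ⟨hp, x, hxI, hxJ, hpx, hgen⟩ := h
  have : Fact p.Prime := ⟨hp⟩
  rw [eq_sup_zmultiples hJI hxI hgen, relIndex_sup_zmultiples]
  exact addOrderOf_eq_prime ((QuotientAddGroup.eq_zero_iff _).2 hpx)
    (mt (QuotientAddGroup.eq_zero_iff x).1 hxJ)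

namespace Subbrace

theorem mem_sup_subgroup_iff (C : Subbrace B) (I : BraceIdeal B) {b : B} :
    b ∈ C.subgroup ⊔ I.subgroup ↔ b ∈ C.addSubgroup ⊔ I.addSubgroup := calc
  b ∈ C.subgroup ⊔ I.subgroup ↔ ∃ c ∈ C.carrier, c⁻¹ * b ∈ I.subgroup := by
    rw [Subgroup.mem_sup_of_normal_right]
    exact exists_congr fun c => and_congr_right fun _ =>
      ⟨fun ⟨i, hi, h⟩ => by simpa [← h] using hi, fun h => ⟨_, h, mul_inv_cancel_left c b⟩⟩
  _ ↔ ∃ c ∈ C.carrier, -c + b ∈ I.addSubgroup := by simp only [I.inv_mul_mem_iff]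
  _ ↔ b ∈ C.addSubgroup ⊔ I.addSubgroup := by
    rw [AddSubgroup.mem_sup_of_normal_right]
    exact exists_congr fun c => and_congr_right fun _ =>
      ⟨fun h => ⟨_, h, add_neg_cancel_left c b⟩, fun ⟨i, hi, h⟩ => by simpa [← h] using hi⟩

/-- The subbrace `C + I` generated by a subbrace `C` and an ideal `I`. -/
def supIdeal (C : Subbrace B) (I : BraceIdeal B) : Subbrace B where
  carrier := (C.addSubgroup ⊔ I.addSubgroup : AddSubgroup B)
  zero_mem := AddSubgroup.zero_mem _
  add_mem := AddSubgroup.add_mem _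
  neg_mem := AddSubgroup.neg_mem _
  mul_mem {a b} := by
    simpa only [SetLike.mem_coe, ← mem_sup_subgroup_iff] using Subgroup.mul_mem _
  inv_mem {a} := by
    simpa only [SetLike.mem_coe, ← mem_sup_subgroup_iff] using Subgroup.inv_mem _

/-- A maximal subbrace: a proper subbrace contained in no larger proper subbrace. -/
def IsMaximal (C : Subbrace B) : Prop :=
  C.carrier ≠ Set.univ ∧ ∀ D : Subbrace B, C.carrier ⊆ D.carrier →
    D.carrier = C.carrier ∨ D.carrier = Set.univ

namespace IsMaximal

variable {C : Subbrace B} {I J : BraceIdeal B}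

theorem addSubgroup_sup_eq_top (hC : C.IsMaximal) (hIC : ¬ I.addSubgroup ≤ C.addSubgroup) :
    C.addSubgroup ⊔ I.addSubgroup = ⊤ := by
  rcases hC.2 (C.supIdeal I) fun _ hc => AddSubgroup.mem_sup_left hc with h | h
  · exact absurd (fun y hy => h.subset (AddSubgroup.mem_sup_right hy)) hIC
  · exact SetLike.coe_injective h

theorem subgroup_sup_eq_top (hC : C.IsMaximal) (hIC : ¬ I.addSubgroup ≤ C.addSubgroup) :
    C.subgroup ⊔ I.subgroup = ⊤ := by
  ext b
  simp [mem_sup_subgroup_iff, hC.addSubgroup_sup_eq_top hIC]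

theorem inf_covBy (hC : C.IsMaximal) (hIC : ¬ I.addSubgroup ≤ C.addSubgroup)
    (hideal : ∀ A, C.addSubgroup ⊓ I.addSubgroup ≤ A → A ≤ I.addSubgroup →
      ∃ K : BraceIdeal B, K.addSubgroup = A) :
    C.addSubgroup ⊓ I.addSubgroup ⋖ I.addSubgroup := by
  refine ⟨inf_lt_right.2 hIC, fun A hlt hAI => hAI.not_ge fun y hy => ?_⟩
  obtain ⟨K, rfl⟩ := hideal A hlt.le hAI.le
  have hKC : ¬ K.addSubgroup ≤ C.addSubgroup := fun h => hlt.not_ge (le_inf h hAI.le)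
  have hytop : y ∈ C.addSubgroup ⊔ K.addSubgroup :=
    hC.addSubgroup_sup_eq_top hKC ▸ AddSubgroup.mem_top y
  obtain ⟨c, hc, k, hk, rfl⟩ := AddSubgroup.mem_sup_of_normal_right.1 hytop
  have hcI : c ∈ I.addSubgroup := by simpa using I.addSubgroup.sub_mem hy (hAI.le hk)
  exact K.addSubgroup.add_mem (hlt.le ⟨hc, hcI⟩) hk

theorem exists_ideal_prime_relIndex_of_socle (hC : C.IsMaximal)
    (hJC : J.addSubgroup ≤ C.addSubgroup) (hIC : ¬ I.addSubgroup ≤ C.addSubgroup) {x : B}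
    (hI : I.addSubgroup = J.addSubgroup ⊔ AddSubgroup.zmultiples x)
    (hsoc : ∀ a ∈ I.carrier, MemSocQuot J.carrier a) :
    ∃ K : BraceIdeal B, K.addSubgroup ≤ C.addSubgroup ∧
      (K.addSubgroup.relIndex I.addSubgroup).Prime := by
  have hJK : J.addSubgroup ≤ C.addSubgroup ⊓ I.addSubgroup := le_inf hJC (hI ▸ le_sup_left)
  obtain ⟨K, hK⟩ := BraceIdeal.exists_addSubgroup_eq hI hsoc hJK inf_le_right
  have hcov : K.addSubgroup ⋖ I.addSubgroup := hK ▸ hC.inf_covBy hIC fun _ hKA hAI =>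
    BraceIdeal.exists_addSubgroup_eq hI hsoc (hJK.trans hKA) hAI
  have hIK : I.addSubgroup = K.addSubgroup ⊔ AddSubgroup.zmultiples x :=
    le_antisymm (hI.le.trans (sup_le_sup_right (hK ▸ hJK) _))
      (sup_le hcov.le (hI ▸ le_sup_right))
  refine ⟨K, hK ▸ inf_le_left, ?_⟩
  rw [hIK] at hcov ⊢
  exact prime_relIndex_of_covBy hcov

end IsMaximal

end Subbrace

theorem IsSupersoluble.exists_ideal_prime_relIndex (hB : IsSupersoluble B) {C : Subbrace B}
    (hC : C.IsMaximal) : ∃ K I : BraceIdeal B, K.addSubgroup ≤ C.addSubgroup ∧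
      ¬ I.addSubgroup ≤ C.addSubgroup ∧ (K.addSubgroup.relIndex I.addSubgroup).Prime := by
  obtain ⟨n, I, h0, hn, hle, hfactor⟩ := hB
  have hbot : (I 0).carrier ⊆ C.carrier := h0 ▸ Set.singleton_subset_iff.2 C.zero_mem
  have htop : ¬ (I n).carrier ⊆ C.carrier := hn ▸ mt Set.univ_subset_iff.1 hC.1
  obtain ⟨i, hi, hJC, hIC⟩ := exists_le_succ_not_le (f := fun i => (I i).carrier) hbot htop
  rcases hfactor i hi with ⟨⟨x, hx, hgen, -⟩, hsoc⟩ | ⟨p, hp⟩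
  · obtain ⟨K, hKC, hK⟩ := hC.exists_ideal_prime_relIndex_of_socle hJC hIC
      (eq_sup_zmultiples (hle i hi) hx hgen) hsoc
    exact ⟨K, I (i + 1), hKC, hIC, hK⟩
  · exact ⟨I i, I (i + 1), hJC, hIC, hp.relIndex_eq (hle i hi) ▸ hp.1⟩

end Brace

/-- In a supersoluble brace `B`, every maximal subbrace `C` has prime index: the
additive and multiplicative indices coincide and equal a prime `p`; in particular
`(C,+)` is a maximal subgroup of `(B,+)` and `(C,·)` is a maximal subgroup of
`(B,·)`, both of prime index. -/
theorem maximal_subbrace_prime_index (B : Type*) [SkewBrace B]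
    (hB : IsSupersoluble B) (C : Subbrace B) (hne : C.carrier ≠ Set.univ)
    (hmax : ∀ D : Subbrace B, C.carrier ⊆ D.carrier →
      D.carrier = C.carrier ∨ D.carrier = Set.univ) :
    ∃ p : ℕ, p.Prime ∧ C.addSubgroup.index = p ∧ C.subgroup.index = p ∧
      IsCoatom C.addSubgroup ∧ IsCoatom C.subgroup := by
  have hC : C.IsMaximal := ⟨hne, hmax⟩
  obtain ⟨K, I, hKC, hIC, hp⟩ := hB.exists_ideal_prime_relIndex hC
  have hadd : C.addSubgroup.index = K.addSubgroup.relIndex I.addSubgroup :=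
    addSubgroup_index_eq_of_prime_relIndex (hC.addSubgroup_sup_eq_top hIC) hKC hIC hp
  have hmul : C.subgroup.index = K.addSubgroup.relIndex I.addSubgroup := by
    rw [← K.relIndex_subgroup] at hp ⊢
    exact subgroup_index_eq_of_prime_relIndex (hC.subgroup_sup_eq_top hIC) hKC hIC hp
  exact ⟨_, hp, hadd, hmul, addSubgroup_isCoatom_of_prime_index (hadd ▸ hp),
    subgroup_isCoatom_of_prime_index (hmul ▸ hp)⟩

end SkewBrace
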